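/- Let P be symmetric, stochastic, irreducible and positive semi-definite, Q = I_m − P, σ = min{1, n^{2/p−1}}, τ > 0, and suppose x⋆ ∈ (ℝⁿ)^m is consensual (x_i⋆ = x_j⋆ for all i,j) with each x_i⋆, x_i^t ∈ X. With μ^t − μ^{t−1} = τ(Q ⊗ I_n)x^t, one has Σ_i ‖x_i^t − x_i⋆‖_p² − (σ/τ²)‖μ^t − μ^{t−1}‖₂² ≥ 0. -/

import Mathlib

/-- The `ℓ_p` norm of a vector in `ℝⁿ`. -/
noncomputable def lpNorm {n : ℕ} (p : ENNReal) [Fact (1 ≤ p)]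
    (w : Fin n → ℝ) : ℝ :=
  ‖(WithLp.equiv p (Fin n → ℝ)).symm w‖

/-!
Write `Q = 1 - P`. A consensual `x⋆` is fixed by `P`, so `Q x = Q (x - x⋆)`, and it remains to
combine two facts. First, `Q` is an `ℓ₂` contraction: its quadratic form is
`½ ∑ i j, P i j * (y i - y j) ^ 2 ≥ 0`, so `P` and `Q` are both positive semidefinite, and then so
is `1 - Q² = P + P Q P + Q P Q`. Second, `σ ‖w‖₂² ≤ ‖w‖ₚ²` for every `p > 0`: for `p ≤ 2` by
superadditivity of `t ↦ t ^ (2 / p)`, for `2 ≤ p < ∞` by Jensen's inequality for this function,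
which is then concave, and for `p = ∞` coordinatewise.
-/

open Finset Matrix

theorem sum_smul_eq_of_consensus {ι R E : Type*} [Fintype ι] [Semiring R] [AddCommMonoid E]
    [Module R E] {w : ι → R} (hw : ∑ j, w j = 1) {x : ι → E} (hx : ∀ i j, x i = x j) (i : ι) :
    ∑ j, w j • x j = x i := by
  simp only [hx _ i, ← sum_smul, hw, one_smul]

section Contraction

variable {ι κ R 𝕜 : Type*} [Fintype ι] [DecidableEq ι]

theorem two_mul_dotProduct_one_sub_mulVec [CommRing R] {P : Matrix ι ι R} (hsymm : P.IsSymm)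
    (hrow : ∀ i, ∑ j, P i j = 1) (y : ι → R) :
    2 * (y ⬝ᵥ ((1 - P) *ᵥ y)) = ∑ i, ∑ j, P i j * (y i - y j) ^ 2 := by
  have hleft : ∑ i, ∑ j, P i j * y i ^ 2 = y ⬝ᵥ y := by
    simp only [← sum_mul, hrow, one_mul, dotProduct, sq]
  have hright : ∑ i, ∑ j, P i j * y j ^ 2 = y ⬝ᵥ y := by
    rw [sum_comm, ← hleft]
    simp only [hsymm.apply]
  have hcross : ∑ i, ∑ j, P i j * (y i * y j) = y ⬝ᵥ (P *ᵥ y) := by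
    simp only [dotProduct, mulVec, mul_sum, mul_left_comm]
  calc 2 * (y ⬝ᵥ ((1 - P) *ᵥ y)) = y ⬝ᵥ y + y ⬝ᵥ y - 2 * (y ⬝ᵥ (P *ᵥ y)) := by
        rw [sub_mulVec, one_mulVec, dotProduct_sub]
        ring
    _ = ∑ i, ∑ j, (P i j * y i ^ 2 + P i j * y j ^ 2 - 2 * (P i j * (y i * y j))) := by
        simp only [sum_sub_distrib, sum_add_distrib, ← mul_sum, hleft, hright, hcross]
    _ = ∑ i, ∑ j, P i j * (y i - y j) ^ 2 := by
        congr! 2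
        ring

theorem posSemidef_one_sub_of_mem_rowStochastic [CommRing R] [LinearOrder R]
    [IsStrictOrderedRing R] [StarRing R] [TrivialStar R] {P : Matrix ι ι R} (hsymm : P.IsSymm)
    (hP : P ∈ rowStochastic R ι) : (1 - P).PosSemidef := by
  refine .of_dotProduct_mulVec_nonneg (isHermitian_one.sub ?_) fun y => ?_
  · rw [IsHermitian, conjTranspose_eq_transpose_of_trivial, hsymm.eq]
  · have henergy : 0 ≤ 2 * (y ⬝ᵥ ((1 - P) *ᵥ y)) := by
      rw [two_mul_dotProduct_one_sub_mulVec hsymm (sum_row_of_mem_rowStochastic hP)]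
      exact sum_nonneg fun i _ => sum_nonneg fun j _ =>
        mul_nonneg (nonneg_of_mem_rowStochastic hP) (sq_nonneg _)
    rw [star_trivial]
    exact nonneg_of_mul_nonneg_right henergy two_pos

theorem posSemidef_one_sub_conjTranspose_mul_self [Ring R] [PartialOrder R] [StarRing R]
    [AddLeftMono R] {P : Matrix ι ι R} (hP : P.PosSemidef) (hQ : (1 - P).PosSemidef) :
    (1 - (1 - P)ᴴ * (1 - P)).PosSemidef := by
  have hdecomp : 1 - (1 - P)ᴴ * (1 - P) = P + Pᴴ * (1 - P) * P + (1 - P)ᴴ * P * (1 - P) := by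
    rw [hQ.isHermitian.eq, hP.isHermitian.eq]
    noncomm_ring
  rw [hdecomp]
  exact (hP.add (hQ.conjTranspose_mul_mul_same P)).add (hP.conjTranspose_mul_mul_same (1 - P))

open scoped ComplexOrder

variable [RCLike 𝕜]

theorem star_dotProduct_self_eq_sum_norm_sq [Fintype κ] (y : κ → 𝕜) :
    star y ⬝ᵥ y = ((∑ i, ‖y i‖ ^ 2 : ℝ) : 𝕜) := by
  simp [dotProduct, RCLike.conj_mul]

theorem sum_norm_sq_mulVec_le [Fintype κ] {A : Matrix κ ι 𝕜} (hA : (1 - Aᴴ * A).PosSemidef)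
    (y : ι → 𝕜) : ∑ k, ‖(A *ᵥ y) k‖ ^ 2 ≤ ∑ i, ‖y i‖ ^ 2 := by
  have hnonneg := hA.dotProduct_mulVec_nonneg y
  have hgram : star y ⬝ᵥ ((Aᴴ * A) *ᵥ y) = star (A *ᵥ y) ⬝ᵥ (A *ᵥ y) := by
    rw [star_mulVec, ← mulVec_mulVec, dotProduct_mulVec]
  rw [sub_mulVec, one_mulVec, dotProduct_sub, sub_nonneg, hgram,
    star_dotProduct_self_eq_sum_norm_sq, star_dotProduct_self_eq_sum_norm_sq] at hnonneg
  exact RCLike.ofReal_le_ofReal.1 hnonneg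

theorem sum_sum_norm_sq_sub_sum_smul_le [Fintype κ] {P : Matrix ι ι 𝕜} (hP : P.PosSemidef)
    (hQ : (1 - P).PosSemidef) (z : ι → κ → 𝕜) :
    ∑ i, ∑ l, ‖(z i - ∑ j, P i j • z j) l‖ ^ 2 ≤ ∑ i, ∑ l, ‖z i l‖ ^ 2 := by
  have hcoord : ∀ i l, (z i - ∑ j, P i j • z j) l = ((1 - P) *ᵥ fun j => z j l) i := fun i l => by
    rw [sub_mulVec, one_mulVec]
    simp [mulVec, dotProduct]
  simp only [hcoord]
  rw [sum_comm, sum_comm (f := fun i l => ‖z i l‖ ^ 2)]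
  exact sum_le_sum fun l _ =>
    sum_norm_sq_mulVec_le (posSemidef_one_sub_conjTranspose_mul_self hP hQ) _

end Contraction

section FinsetSums

variable {α : Type*} {f : α → ℝ}

theorem sum_rpow_le_rpow_sum (s : Finset α) (hf : ∀ i ∈ s, 0 ≤ f i) {r : ℝ} (hr : 1 ≤ r) :
    ∑ i ∈ s, f i ^ r ≤ (∑ i ∈ s, f i) ^ r := by
  classical
  induction s using Finset.induction_on with
  | empty => simp [Real.zero_rpow (zero_lt_one.trans_le hr).ne']
  | insert a s ha ih =>
    rw [sum_insert ha, sum_insert ha]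
    rw [forall_mem_insert] at hf
    exact (add_le_add_right (ih hf.2) _).trans
      (Real.add_rpow_le_rpow_add hf.1 (sum_nonneg hf.2) hr)

theorem sum_rpow_le_rpow_card_mul_rpow_sum (s : Finset α) (hf : ∀ i ∈ s, 0 ≤ f i) {r : ℝ}
    (hr₀ : 0 ≤ r) (hr₁ : r ≤ 1) :
    ∑ i ∈ s, f i ^ r ≤ (#s : ℝ) ^ (1 - r) * (∑ i ∈ s, f i) ^ r := by
  rcases s.eq_empty_or_nonempty with rfl | hs
  · simp only [sum_empty]
    positivity
  set n := (#s : ℝ)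
  have hn : 0 < n := Nat.cast_pos.2 hs.card_pos
  have hjensen : n⁻¹ * ∑ i ∈ s, f i ^ r ≤ (n⁻¹ * ∑ i ∈ s, f i) ^ r := by
    simpa only [smul_eq_mul, ← mul_sum] using
      (Real.concaveOn_rpow hr₀ hr₁).le_map_sum (t := s) (w := fun _ => n⁻¹) (p := f)
        (fun _ _ => by positivity)
        (by rw [sum_const, nsmul_eq_mul, mul_inv_cancel₀ hn.ne']) hf
  calc ∑ i ∈ s, f i ^ r = n * (n⁻¹ * ∑ i ∈ s, f i ^ r) := (mul_inv_cancel_left₀ hn.ne' _).symm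
    _ ≤ n * (n⁻¹ * ∑ i ∈ s, f i) ^ r := by gcongr
    _ = n ^ (1 - r) * (∑ i ∈ s, f i) ^ r := by
      rw [Real.mul_rpow (by positivity) (sum_nonneg hf), Real.inv_rpow hn.le,
        Real.rpow_sub hn, Real.rpow_one, div_eq_mul_inv, mul_assoc]

end FinsetSums

section NormComparison

variable {ι : Type*} [Fintype ι]
variable {p : ENNReal} {β : ι → Type*} [∀ i, SeminormedAddCommGroup (β i)]

theorem norm_rpow_eq_rpow_sum_norm_rpow (hp : 0 < p.toReal) (x : PiLp p β) (q : ℝ) :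
    ‖x‖ ^ q = (∑ i, ‖x i‖ ^ p.toReal) ^ (q / p.toReal) := by
  rw [PiLp.norm_eq_sum hp, ← Real.rpow_mul (by positivity), one_div_mul_eq_div]

theorem sum_norm_rpow_eq_sum_rpow_norm_rpow (hp : 0 < p.toReal) (x : PiLp p β) (q : ℝ) :
    ∑ i, ‖x i‖ ^ q = ∑ i, (‖x i‖ ^ p.toReal) ^ (q / p.toReal) := by
  simp only [← Real.rpow_mul (norm_nonneg _), mul_div_cancel₀ _ hp.ne']

theorem sum_norm_rpow_le_norm_rpow (hp : 0 < p.toReal) {q : ℝ} (hpq : p.toReal ≤ q)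
    (x : PiLp p β) : ∑ i, ‖x i‖ ^ q ≤ ‖x‖ ^ q := by
  rw [sum_norm_rpow_eq_sum_rpow_norm_rpow hp, norm_rpow_eq_rpow_sum_norm_rpow hp]
  exact sum_rpow_le_rpow_sum univ (fun i _ => by positivity) ((one_le_div hp).2 hpq)

theorem sum_norm_rpow_le_rpow_card_mul_norm_rpow {q : ℝ} (hq : 0 < q)
    (hqp : ENNReal.ofReal q ≤ p) (x : PiLp p β) :
    ∑ i, ‖x i‖ ^ q ≤ (Fintype.card ι : ℝ) ^ (1 - q / p.toReal) * ‖x‖ ^ q := by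
  rcases eq_or_ne p ⊤ with rfl | hp
  · calc ∑ i, ‖x i‖ ^ q ≤ ∑ _i : ι, ‖x‖ ^ q :=
          sum_le_sum fun i _ =>
            Real.rpow_le_rpow (norm_nonneg _) (PiLp.norm_apply_le x i) hq.le
      _ = (Fintype.card ι : ℝ) ^ (1 - q / (⊤ : ENNReal).toReal) * ‖x‖ ^ q := by simp
  · have hq_le : q ≤ p.toReal := (ENNReal.ofReal_le_iff_le_toReal hp).1 hqp
    have hp₀ : 0 < p.toReal := hq.trans_le hq_le
    rw [sum_norm_rpow_eq_sum_rpow_norm_rpow hp₀, norm_rpow_eq_rpow_sum_norm_rpow hp₀]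
    exact sum_rpow_le_rpow_card_mul_rpow_sum univ (fun i _ => by positivity) (by positivity)
      ((div_le_one hp₀).2 hq_le)

theorem min_one_rpow_card_mul_sum_norm_sq_le (hp : p ≠ 0) (x : PiLp p β) :
    min 1 ((Fintype.card ι : ℝ) ^ (2 / p.toReal - 1)) * ∑ i, ‖x i‖ ^ 2 ≤ ‖x‖ ^ 2 := by
  set n := (Fintype.card ι : ℝ)
  rcases le_total p 2 with hp2 | hp2
  · have hp_pos : 0 < p.toReal := ENNReal.toReal_pos hp (ne_top_of_le_ne_top (by simp) hp2)
    have hp_le : p.toReal ≤ 2 := ENNReal.toReal_mono (by simp) hp2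
    calc min 1 (n ^ (2 / p.toReal - 1)) * ∑ i, ‖x i‖ ^ 2 ≤ 1 * ∑ i, ‖x i‖ ^ 2 := by
          gcongr
          exact min_le_left ..
      _ ≤ ‖x‖ ^ 2 := by
          simpa only [one_mul, Real.rpow_two] using sum_norm_rpow_le_norm_rpow hp_pos hp_le x
  · have hsum : ∑ i, ‖x i‖ ^ 2 ≤ n ^ (1 - 2 / p.toReal) * ‖x‖ ^ 2 := by
      simpa only [Real.rpow_two] using
        sum_norm_rpow_le_rpow_card_mul_norm_rpow two_pos (by simpa using hp2) x
    calc min 1 (n ^ (2 / p.toReal - 1)) * ∑ i, ‖x i‖ ^ 2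
        ≤ n ^ (2 / p.toReal - 1) * (n ^ (1 - 2 / p.toReal) * ‖x‖ ^ 2) := by
          gcongr
          exact min_le_right ..
      _ = n ^ (2 / p.toReal - 1) * (n ^ (2 / p.toReal - 1))⁻¹ * ‖x‖ ^ 2 := by
          rw [← Real.rpow_neg (Nat.cast_nonneg _), neg_sub, mul_assoc]
      _ ≤ ‖x‖ ^ 2 := mul_le_of_le_one_left (sq_nonneg _) mul_inv_le_one

end NormComparison

open scoped ComplexOrder in
theorem dual_increment_bound_general {𝕜 ι κ : Type*} [RCLike 𝕜] [Fintype ι] [DecidableEq ι]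
    [Fintype κ] {p : ENNReal} (hp : p ≠ 0) {P : Matrix ι ι 𝕜} (hP : P.PosSemidef)
    (hQ : (1 - P).PosSemidef) {τ : 𝕜} (hτ : τ ≠ 0) {xt xs μt μtm1 : ι → κ → 𝕜}
    (hxs : ∀ i, ∑ j, P i j • xs j = xs i)
    (hμ : ∀ i, μt i - μtm1 i = τ • (xt i - ∑ j, P i j • xt j)) :
    ∑ i, ‖WithLp.toLp p (xt i - xs i)‖ ^ 2 -
        min 1 ((Fintype.card κ : ℝ) ^ (2 / p.toReal - 1)) / ‖τ‖ ^ 2 *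
          ∑ i, ∑ l, ‖μt i l - μtm1 i l‖ ^ 2 ≥ 0 := by
  set σ := min 1 ((Fintype.card κ : ℝ) ^ (2 / p.toReal - 1))
  have hσ : 0 ≤ σ := by positivity
  set z := xt - xs
  have hincr : ∀ i, μt i - μtm1 i = τ • (z i - ∑ j, P i j • z j) := fun i => by
    simp only [hμ, z, Pi.sub_apply, smul_sub, sum_sub_distrib, hxs]
    abel
  refine sub_nonneg.2 ?_
  calc σ / ‖τ‖ ^ 2 * ∑ i, ∑ l, ‖μt i l - μtm1 i l‖ ^ 2
      = σ * ∑ i, ∑ l, ‖(z i - ∑ j, P i j • z j) l‖ ^ 2 := by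
        have hentry : ∀ i l, μt i l - μtm1 i l = τ * (z i - ∑ j, P i j • z j) l :=
          fun i l => congrFun (hincr i) l
        simp only [hentry, norm_mul, mul_pow, ← mul_sum]
        rw [← mul_assoc, div_mul_cancel₀ _ (by simpa using hτ)]
    _ ≤ σ * ∑ i, ∑ l, ‖z i l‖ ^ 2 :=
        mul_le_mul_of_nonneg_left (sum_sum_norm_sq_sub_sum_smul_le hP hQ z) hσ
    _ = ∑ i, σ * ∑ l, ‖z i l‖ ^ 2 := mul_sum ..
    _ ≤ ∑ i, ‖WithLp.toLp p (xt i - xs i)‖ ^ 2 :=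
        sum_le_sum fun i _ => min_one_rpow_card_mul_sum_norm_sq_le hp (WithLp.toLp p (z i))

/-- With `μᵗ − μᵗ⁻¹ = τ(Q ⊗ Iₙ)xᵗ`, a consensual `x⋆` and
`σ = min{1, n^{2/p−1}}`, one has
`∑ᵢ ‖xᵢᵗ − xᵢ⋆‖ₚ² − (σ/τ²)‖μᵗ − μᵗ⁻¹‖₂² ≥ 0`. -/
theorem dual_increment_bound {m n : ℕ} (p : ENNReal) [Fact (1 ≤ p)]
    (P : Matrix (Fin m) (Fin m) ℝ)
    (hsym : P.IsSymm) (hnn : ∀ i j, 0 ≤ P i j)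
    (hrow : ∀ i, ∑ j, P i j = 1) (hpsd : P.PosSemidef)
    (hirr : ∀ i j, ∃ k : ℕ, 0 < (P ^ k) i j)
    (X : Set (Fin n → ℝ)) (τ : ℝ) (hτ : 0 < τ)
    (xt xs μt μtm1 : Fin m → (Fin n → ℝ))
    (hxtX : ∀ i, xt i ∈ X) (hxsX : ∀ i, xs i ∈ X)
    (hcons : ∀ i j, xs i = xs j)
    (hμ : ∀ i, μt i - μtm1 i = τ • (xt i - ∑ j, P i j • xt j)) :
    ∑ i, lpNorm p (xt i - xs i) ^ 2 -
        min 1 ((n : ℝ) ^ (2 / p.toReal - 1)) / τ ^ 2 *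
          ∑ i, ∑ l, (μt i l - μtm1 i l) ^ 2 ≥ 0 := by
  simpa only [lpNorm, WithLp.equiv_symm_apply, Real.norm_eq_abs, sq_abs, Fintype.card_fin] using
    dual_increment_bound_general (p := p) (zero_lt_one.trans_le Fact.out).ne' hpsd
      (posSemidef_one_sub_of_mem_rowStochastic hsym (mem_rowStochastic_iff_sum.2 ⟨hnn, hrow⟩))
      hτ.ne' (fun i => sum_smul_eq_of_consensus (hrow i) hcons i) hμ
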